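/- (Sharpness of the Serrin exponent) Let n ≥ 1, s ∈ (0,1) with n > 2s, let q > n/(n−2s), and let K(z) := |z|^{−n−2s} (an admissible kernel). Then there exists a constant c > 0 such that the function u(x) := c (1+|x|)^{−2s/(q−1)} is a positive weak supersolution of L_K u = u^q in ℝⁿ; that is, u > 0 everywhere, u ∈ L^q_loc(ℝⁿ) ∩ L¹_{2s}(ℝⁿ), and ∫_{ℝⁿ} u(x) L_K φ(x) dx ≥ ∫_{ℝⁿ} u(x)^q φ(x) dx for every φ ∈ C_c^∞(ℝⁿ) with φ ≥ 0. -/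

import Mathlib

open MeasureTheory Metric

noncomputable section

abbrev Euc (n : ℕ) := EuclideanSpace ℝ (Fin n)

def IsAdmissibleKernel (n : ℕ) (s lam Lam : ℝ) (K : Euc n → ℝ) : Prop :=
  0 < lam ∧ lam ≤ Lam ∧ Measurable K ∧
  (∀ z : Euc n, z ≠ 0 → K z = K (-z)) ∧
  (∀ z : Euc n, z ≠ 0 →
    lam * ‖z‖ ^ (-(n : ℝ) - 2 * s) ≤ K z ∧ K z ≤ Lam * ‖z‖ ^ (-(n : ℝ) - 2 * s))

def LK (n : ℕ) (K φ : Euc n → ℝ) (x : Euc n) : ℝ :=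
  (1 / 2) * ∫ z : Euc n, (2 * φ x - φ (x + z) - φ (x - z)) * K z

def IsTestFun (n : ℕ) (φ : Euc n → ℝ) : Prop :=
  ContDiff ℝ (⊤ : ℕ∞) φ ∧ HasCompactSupport φ

def MemL1Tail (n : ℕ) (s : ℝ) (u : Euc n → ℝ) : Prop :=
  LocallyIntegrable u volume ∧
  Integrable (fun x : Euc n => |u x| * (1 + ‖x‖) ^ (-(n : ℝ) - 2 * s)) volume

def MemLqLoc (n : ℕ) (q : ℝ) (u : Euc n → ℝ) : Prop :=
  ∀ R : ℝ, 0 < R → IntegrableOn (fun x : Euc n => u x ^ q) (ball (0 : Euc n) R) volume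

def IsWeakSupersol (n : ℕ) (s q : ℝ) (K u : Euc n → ℝ) : Prop :=
  Measurable u ∧ (∀ x, 0 ≤ u x) ∧ MemLqLoc n q u ∧ MemL1Tail n s u ∧
  ∀ φ : Euc n → ℝ, IsTestFun n φ → (∀ x, 0 ≤ φ x) →
    (∫ x : Euc n, u x ^ q * φ x) ≤ ∫ x : Euc n, u x * LK n K φ x

def IsCutoff (n : ℕ) (η : Euc n → ℝ) : Prop :=
  ContDiff ℝ (⊤ : ℕ∞) η ∧ (∀ x, 0 ≤ η x ∧ η x ≤ 1) ∧
  (∀ x : Euc n, ‖x‖ ≤ 1 → η x = 1) ∧ (∀ x : Euc n, 2 ≤ ‖x‖ → η x = 0)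

def cutoffSq (n : ℕ) (η : Euc n → ℝ) (R : ℝ) : Euc n → ℝ :=
  fun x => (η (R⁻¹ • x)) ^ 2

/-!
Put `β = 2s / (q - 1)`, so that `0 < β < n - 2s` and `βq = β + 2s`. For the norm power `|w|^(-β)`
and `a ≠ 0`, the inversion in the sphere of radius `|a|` about `0` pulls the region `|w| ≥ |a|` back
to the ball `|w| ≤ |a|`. There the integrand of the fractional Laplacian at `a` and its pullback add
up to a positive multiple of `(τ^β - 1) (τ^(n-2s-β) - 1) ≥ 0` with `τ = |a| / |w| ≥ 1`. The
inversion moves the points of the ball away from `a`, so the folding is compatible with cutting out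
a ball about `a`, and one gets the lower bound `κ |a|^(-β-2s)`, uniformly in the truncation.

For a unit vector `e` along `x`, the translate `|y + e|^(-β)` of the norm power lies above
`(1 + |y|)^(-β)` and touches it at `y = x`. The lower bound therefore passes to `(1 + |x|)^(-β)`.
Since the kernel is even, the truncated operators are symmetric, so the bound can be tested against
`φ ≥ 0` and the operator moved onto `φ` before the truncation is removed. Multiplying by `c` with
`c^(q-1) = κ` turns the resulting linear inequality into the one with `u^q`.
-/

open Module (finrank)
open scoped Topology

section SecondDifference

/-- The second difference of `φ` at `x` in the direction `z`, with the sign convention of `LK`: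
it is positive at a strict maximum. -/
def secondDiff {G : Type*} [AddGroup G] (φ : G → ℝ) (x z : G) : ℝ :=
  2 * φ x - φ (x + z) - φ (x - z)

section AddGroup

variable {G : Type*} [AddGroup G] {φ u : G → ℝ}

lemma secondDiff_zero_right (φ : G → ℝ) (x : G) : secondDiff φ x 0 = 0 := by
  simp only [secondDiff, add_zero, sub_zero]
  ring

lemma abs_secondDiff_le_add (φ : G → ℝ) (x z : G) :
    |secondDiff φ x z| ≤ 2 * |φ x| + |φ (x + z)| + |φ (x - z)| := by
  calc |secondDiff φ x z| ≤ |2 * φ x| + |φ (x + z)| + |φ (x - z)| :=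
        (abs_sub _ _).trans (add_le_add_left (abs_sub _ _) _)
    _ = 2 * |φ x| + |φ (x + z)| + |φ (x - z)| := by rw [abs_mul, abs_two]

lemma abs_secondDiff_le_of_abs_le {C : ℝ} (hφ : ∀ x, |φ x| ≤ C) (x z : G) :
    |secondDiff φ x z| ≤ 4 * C := by
  linarith [abs_secondDiff_le_add φ x z, hφ x, hφ (x + z), hφ (x - z)]

variable [MeasurableSpace G] [MeasurableAdd₂ G] [MeasurableSub₂ G]

lemma measurable_uncurry_secondDiff (hφ : Measurable φ) :
    Measurable fun p : G × G => secondDiff φ p.1 p.2 := by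
  unfold secondDiff
  fun_prop

lemma integrable_prod_mul_secondDiff {μ ν : Measure G} [SFinite ν] {K : G → ℝ}
    (hφ : Integrable φ μ) (hu : Measurable u) {C : ℝ} (huC : ∀ x, |u x| ≤ C)
    (hK : Integrable K ν) :
    Integrable (fun p : G × G => φ p.1 * (secondDiff u p.1 p.2 * K p.2)) (μ.prod ν) :=
  ((hφ.mul_prod hK).mul_bdd (measurable_uncurry_secondDiff hu).aestronglyMeasurable
    (.of_forall fun p => abs_secondDiff_le_of_abs_le huC p.1 p.2)).congr
    (.of_forall fun p => by ring)

end AddGroup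

section TranslationInvariant

variable {G : Type*} [AddGroup G] [MeasurableSpace G] [MeasurableAdd G] {μ : Measure G}
  [μ.IsAddRightInvariant] {φ u : G → ℝ}

lemma integrable_secondDiff (hφ : Integrable φ μ) (z : G) :
    Integrable (fun x => secondDiff φ x z) μ :=
  ((hφ.const_mul 2).sub (hφ.comp_add_right z)).sub (hφ.comp_sub_right z)

lemma integral_abs_secondDiff_le (hφ : Integrable φ μ) (z : G) :
    ∫ x, |secondDiff φ x z| ∂μ ≤ 4 * ∫ x, |φ x| ∂μ := by
  have h₀ : Integrable (fun x => 2 * |φ x|) μ := hφ.abs.const_mul 2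
  have h₁ : Integrable (fun x => |φ (x + z)|) μ := hφ.abs.comp_add_right z
  have h₂ : Integrable (fun x => |φ (x - z)|) μ := hφ.abs.comp_sub_right z
  calc ∫ x, |secondDiff φ x z| ∂μ
      ≤ ∫ x, (2 * |φ x| + |φ (x + z)| + |φ (x - z)|) ∂μ :=
        integral_mono (integrable_secondDiff hφ z).abs ((h₀.add h₁).add h₂)
          fun x => abs_secondDiff_le_add φ x z
    _ = 4 * ∫ x, |φ x| ∂μ := by
        rw [integral_add (by fun_prop) h₂, integral_add h₀ h₁, integral_const_mul,
          integral_add_right_eq_self (fun x => |φ x|), integral_sub_right_eq_self (fun x => |φ x|)]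
        ring

lemma integral_mul_secondDiff_comm (hφ : Integrable φ μ) (hu : Measurable u) {C : ℝ}
    (huC : ∀ x, |u x| ≤ C) (z : G) :
    ∫ x, u x * secondDiff φ x z ∂μ = ∫ x, φ x * secondDiff u x z ∂μ := by
  have h₀ : Integrable (fun x => φ x * u x) μ :=
    hφ.mul_bdd hu.aestronglyMeasurable (.of_forall huC)
  have h₁ : Integrable (fun x => φ x * u (x + z)) μ :=
    hφ.mul_bdd (hu.comp (measurable_add_const z)).aestronglyMeasurable (.of_forall fun x => huC _)
  have h₂ : Integrable (fun x => φ x * u (x - z)) μ := by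
    simp_rw [sub_eq_add_neg]
    exact hφ.mul_bdd (hu.comp (measurable_add_const (-z))).aestronglyMeasurable
      (.of_forall fun x => huC _)
  have h₁' : Integrable (fun x => φ (x - z) * u x) μ := by simpa using h₁.comp_sub_right z
  have h₂' : Integrable (fun x => φ (x + z) * u x) μ := by simpa using h₂.comp_add_right z
  have shift₁ : ∫ x, φ (x - z) * u x ∂μ = ∫ x, φ x * u (x + z) ∂μ := by
    simpa using integral_sub_right_eq_self (μ := μ) (fun x => φ x * u (x + z)) z
  have shift₂ : ∫ x, φ (x + z) * u x ∂μ = ∫ x, φ x * u (x - z) ∂μ := by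
    simpa using integral_add_right_eq_self (μ := μ) (fun x => φ x * u (x - z)) z
  calc ∫ x, u x * secondDiff φ x z ∂μ
      = ∫ x, (2 * (φ x * u x) - φ (x + z) * u x - φ (x - z) * u x) ∂μ := by
        congr 1; ext x; simp only [secondDiff]; ring
    _ = ∫ x, (2 * (φ x * u x) - φ x * u (x + z) - φ x * u (x - z)) ∂μ := by
        rw [integral_sub (by fun_prop) h₁', integral_sub (by fun_prop) h₂',
          integral_sub (by fun_prop) h₂, integral_sub (by fun_prop) h₁, shift₁, shift₂]
        ring
    _ = ∫ x, φ x * secondDiff u x z ∂μ := by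
        congr 1; ext x; simp only [secondDiff]; ring

lemma integral_integral_mul_secondDiff_comm {ν : Measure G} [MeasurableAdd₂ G] [MeasurableSub₂ G]
    [SFinite μ] [SFinite ν] {K : G → ℝ} (hφ : Integrable φ μ) (hu : Measurable u) {C : ℝ}
    (huC : ∀ x, |u x| ≤ C) (hK : Integrable K ν) :
    ∫ z, ∫ x, u x * (secondDiff φ x z * K z) ∂μ ∂ν =
      ∫ x, φ x * ∫ z, secondDiff u x z * K z ∂ν ∂μ := by
  calc ∫ z, ∫ x, u x * (secondDiff φ x z * K z) ∂μ ∂ν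
      = ∫ z, ∫ x, φ x * (secondDiff u x z * K z) ∂μ ∂ν := by
        congr 1; ext z
        simp only [← mul_assoc, integral_mul_const, integral_mul_secondDiff_comm hφ hu huC z]
    _ = ∫ x, ∫ z, φ x * (secondDiff u x z * K z) ∂ν ∂μ :=
        (integral_integral_swap (integrable_prod_mul_secondDiff hφ hu huC hK)).symm
    _ = ∫ x, φ x * ∫ z, secondDiff u x z * K z ∂ν ∂μ := by simp only [integral_const_mul]

end TranslationInvariant

variable {E : Type*} [NormedAddCommGroup E] {φ : E → ℝ}

lemma secondDiff_eq_zero_of_norm_lt {ρ : ℝ} (hρ : ∀ x, ρ < ‖x‖ → φ x = 0) {x z : E}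
    (h : ρ + ‖z‖ < ‖x‖) : secondDiff φ x z = 0 := by
  have hadd : ‖x‖ - ‖z‖ ≤ ‖x + z‖ := by simpa using norm_sub_norm_le x (-z)
  have hsub : ‖x‖ - ‖z‖ ≤ ‖x - z‖ := norm_sub_norm_le x z
  rw [secondDiff, hρ x (by linarith [norm_nonneg z]), hρ (x + z) (by linarith),
    hρ (x - z) (by linarith)]
  ring

variable [NormedSpace ℝ E]

lemma exists_abs_secondDiff_le_mul_norm_sq (hφ : ContDiff ℝ 2 φ) (hsupp : HasCompactSupport φ) :
    ∃ M, ∀ x z, |secondDiff φ x z| ≤ M * ‖z‖ ^ 2 := by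
  have hφ' : ContDiff ℝ 1 (fderiv ℝ φ) := hφ.fderiv_right (by norm_num)
  have hdiff : Differentiable ℝ φ := hφ.differentiable (by simp)
  obtain ⟨M, hM⟩ := hφ'.lipschitzWith_of_hasCompactSupport (hsupp.fderiv (𝕜 := ℝ)) one_ne_zero
  refine ⟨M, fun x z => ?_⟩
  have hderiv : ∀ y ∈ Set.univ, ‖fderiv ℝ (fun y => φ (y + z) - φ y) y‖ ≤ M * ‖z‖ := fun y _ => by
    rw [fderiv_fun_sub (by fun_prop) (by fun_prop), fderiv_comp_add_right]
    simpa [dist_eq_norm] using hM.dist_le_mul (y + z) y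
  have hmvt : ‖φ (x + z) - φ x - (φ x - φ (x - z))‖ ≤ M * ‖z‖ * ‖z‖ := by
    simpa using convex_univ.norm_image_sub_le_of_norm_fderiv_le (fun y _ => by fun_prop) hderiv
      (Set.mem_univ (x - z)) (Set.mem_univ x)
  calc |secondDiff φ x z| = ‖φ (x + z) - φ x - (φ x - φ (x - z))‖ := by
        rw [Real.norm_eq_abs, abs_sub_comm, secondDiff]; ring_nf
    _ ≤ M * ‖z‖ ^ 2 := hmvt.trans_eq (by ring)

variable [FiniteDimensional ℝ E] [MeasurableSpace E] {μ : Measure E}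

lemma exists_integral_abs_secondDiff_le_mul_norm_sq [IsFiniteMeasureOnCompacts μ]
    (hφ : ContDiff ℝ 2 φ) (hsupp : HasCompactSupport φ) :
    ∃ C, ∀ z, ‖z‖ ≤ 1 → ∫ x, |secondDiff φ x z| ∂μ ≤ C * ‖z‖ ^ 2 := by
  obtain ⟨M, hM⟩ := exists_abs_secondDiff_le_mul_norm_sq hφ hsupp
  obtain ⟨ρ, hρ⟩ : ∃ ρ, ∀ x, ρ < ‖x‖ → φ x = 0 := by
    obtain ⟨ρ, hρ⟩ := hsupp.isCompact.isBounded.subset_closedBall (0 : E)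
    refine ⟨ρ, fun x hx => image_eq_zero_of_notMem_tsupport fun hmem => hx.not_ge ?_⟩
    simpa using hρ hmem
  set B := closedBall (0 : E) (ρ + 1)
  refine ⟨M * μ.real B, fun z hz => ?_⟩
  have hB : ∀ x ∉ B, |secondDiff φ x z| = 0 := fun x hx => by
    have : ρ + 1 < ‖x‖ := by simpa [B] using hx
    rw [secondDiff_eq_zero_of_norm_lt hρ (by linarith), abs_zero]
  calc ∫ x, |secondDiff φ x z| ∂μ = ∫ x in B, |secondDiff φ x z| ∂μ :=
        (setIntegral_eq_integral_of_forall_compl_eq_zero hB).symm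
    _ ≤ M * ‖z‖ ^ 2 * μ.real B :=
        (Real.le_norm_self _).trans <| norm_setIntegral_le_of_norm_le_const
          (isCompact_closedBall 0 (ρ + 1)).measure_lt_top fun x _ => (abs_abs _).trans_le (hM x z)
    _ = M * μ.real B * ‖z‖ ^ 2 := by ring

lemma exists_integral_abs_secondDiff_le_mul_min [BorelSpace E] [μ.IsAddHaarMeasure]
    (hφ : ContDiff ℝ 2 φ) (hsupp : HasCompactSupport φ) :
    ∃ C, ∀ z, ∫ x, |secondDiff φ x z| ∂μ ≤ C * min 1 (‖z‖ ^ 2) := by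
  obtain ⟨C, hC⟩ := exists_integral_abs_secondDiff_le_mul_norm_sq (μ := μ) hφ hsupp
  have hi : Integrable φ μ := hφ.continuous.integrable_of_hasCompactSupport hsupp
  refine ⟨max C (4 * ∫ x, |φ x| ∂μ), fun z => ?_⟩
  rcases le_or_gt ‖z‖ 1 with hz | hz
  · rw [min_eq_right (pow_le_one₀ (norm_nonneg z) hz)]
    exact (hC z hz).trans (by gcongr; exact le_max_left _ _)
  · rw [min_eq_left (one_le_pow₀ hz.le), mul_one]
    exact (integral_abs_secondDiff_le hi z).trans (le_max_right _ _)

end SecondDifference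

section LevyKernel

lemma min_one_norm_sq_pos {E : Type*} [NormedAddCommGroup E] {z : E} (hz : z ≠ 0) :
    0 < min 1 (‖z‖ ^ 2) := by
  have := norm_pos_iff.2 hz
  positivity

variable {E : Type*} [NormedAddCommGroup E] [MeasurableSpace E] [BorelSpace E]
  {μ : Measure E} {K φ u g : E → ℝ} {ε : ℝ}

/-- The Lévy condition `∫ min(1, |z|²) |K(z)| dz < ∞`, under which the operator with jump kernel
`K` is defined on `C²` functions with compact support. -/
def IsLevyKernel (K : E → ℝ) (μ : Measure E) : Prop :=
  Integrable (fun z => min 1 (‖z‖ ^ 2) * K z) μ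

lemma measurableSet_lt_norm_sub (ε : ℝ) (a : E) : MeasurableSet {z : E | ε < ‖z - a‖} :=
  (isOpen_lt continuous_const (by fun_prop)).measurableSet

lemma measurableSet_lt_norm (ε : ℝ) : MeasurableSet {z : E | ε < ‖z‖} :=
  (isOpen_lt continuous_const continuous_norm).measurableSet

lemma IsLevyKernel.integrableOn_lt_norm (hK : IsLevyKernel K μ) (hε : 0 < ε) :
    IntegrableOn K {z | ε < ‖z‖} μ := by
  have hbdd : IntegrableOn (fun z => (min 1 (‖z‖ ^ 2))⁻¹ * (min 1 (‖z‖ ^ 2) * K z))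
      {z | ε < ‖z‖} μ := by
    refine (hK.integrableOn (s := {z | ε < ‖z‖})).bdd_mul (c := (min 1 (ε ^ 2))⁻¹)
      (by fun_prop : Measurable fun z : E => (min 1 (‖z‖ ^ 2))⁻¹).aestronglyMeasurable ?_
    refine (ae_restrict_iff' (measurableSet_lt_norm ε)).2 (.of_forall fun z hz => ?_)
    have hz : ε < ‖z‖ := hz
    rw [Real.norm_of_nonneg (by positivity)]
    gcongr
  refine hbdd.congr_fun (fun z hz => ?_) (measurableSet_lt_norm ε)
  exact inv_mul_cancel_left₀ (min_one_norm_sq_pos (norm_pos_iff.1 (hε.trans hz))).ne' _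

lemma aecover_lt_norm [NullSingletonClass μ] :
    AECover μ (𝓝[>] 0) fun ε : ℝ => {z : E | ε < ‖z‖} where
  ae_eventually_mem := by
    filter_upwards [compl_mem_ae_iff.2 (measure_singleton (0 : E))] with z hz
    exact nhdsWithin_le_nhds (Iio_mem_nhds (norm_pos_iff.2 hz))
  measurableSet := measurableSet_lt_norm

lemma setIntegral_secondDiff_mul_of_even [μ.IsNegInvariant] (hK : ∀ z, K (-z) = K z) {x : E}
    (hu : IntegrableOn (fun z => (u x - u (x + z)) * K z) {z | ε < ‖z‖} μ) :
    ∫ z in {z | ε < ‖z‖}, secondDiff u x z * K z ∂μ =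
      2 * ∫ z in {z | ε < ‖z‖}, (u x - u (x + z)) * K z ∂μ := by
  set f : E → ℝ := fun z => (u x - u (x + z)) * K z
  have hneg := Measure.measurePreserving_neg μ
  have hemb : MeasurableEmbedding (Neg.neg : E → E) := (MeasurableEquiv.neg E).measurableEmbedding
  have hpre : Neg.neg ⁻¹' {z : E | ε < ‖z‖} = {z | ε < ‖z‖} := by ext z; simp
  have hint : ∫ z in {z | ε < ‖z‖}, f (-z) ∂μ = ∫ z in {z | ε < ‖z‖}, f z ∂μ := by
    simpa only [hpre] using hneg.setIntegral_preimage_emb hemb f {z | ε < ‖z‖}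
  have hfneg : IntegrableOn (fun z => f (-z)) {z | ε < ‖z‖} μ := by
    simpa only [hpre, Function.comp_def] using (hneg.integrableOn_comp_preimage hemb).2 hu
  calc ∫ z in {z | ε < ‖z‖}, secondDiff u x z * K z ∂μ
      = ∫ z in {z | ε < ‖z‖}, (f z + f (-z)) ∂μ := by
        congr 1; ext z
        simp only [f, secondDiff, hK, ← sub_eq_add_neg]; ring
    _ = 2 * ∫ z in {z | ε < ‖z‖}, f z ∂μ := by rw [integral_add hu hfneg, hint, two_mul]

variable [NormedSpace ℝ E] [FiniteDimensional ℝ E] [μ.IsAddHaarMeasure]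

lemma IsLevyKernel.integrable_secondDiff_mul (hK : IsLevyKernel K μ) (hφ : ContDiff ℝ 2 φ)
    (hsupp : HasCompactSupport φ) :
    Integrable (fun p : E × E => secondDiff φ p.1 p.2 * K p.2) (μ.prod μ) := by
  obtain ⟨C, hC⟩ := exists_integral_abs_secondDiff_le_mul_min (μ := μ) hφ hsupp
  have hi : Integrable φ μ := hφ.continuous.integrable_of_hasCompactSupport hsupp
  have hmeas : AEStronglyMeasurable (fun p : E × E => secondDiff φ p.1 p.2 * K p.2)
      (μ.prod μ) := by
    have hquot : Measurable fun p : E × E => secondDiff φ p.1 p.2 / min 1 (‖p.2‖ ^ 2) :=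
      (measurable_uncurry_secondDiff hφ.continuous.measurable).div (by fun_prop)
    refine (hquot.aestronglyMeasurable.mul hK.aestronglyMeasurable.comp_snd).congr
      (.of_forall fun p => ?_)
    rcases eq_or_ne p.2 0 with hp | hp
    · simp [hp, secondDiff_zero_right]
    · simp only [Pi.mul_apply]
      field_simp [(min_one_norm_sq_pos hp).ne']
  rw [integrable_prod_iff' hmeas]
  refine ⟨.of_forall fun z => (integrable_secondDiff hi z).mul_const (K z), ?_⟩
  refine (hK.norm.const_mul C).mono' hmeas.norm.prod_swap.integral_prod_right'
    (.of_forall fun z => ?_)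
  calc ‖∫ x, ‖secondDiff φ x z * K z‖ ∂μ‖ = (∫ x, |secondDiff φ x z| ∂μ) * |K z| := by
        rw [Real.norm_of_nonneg (by positivity), ← integral_mul_const]
        simp only [norm_mul, Real.norm_eq_abs]
    _ ≤ C * min 1 (‖z‖ ^ 2) * |K z| := by gcongr; exact hC z
    _ = C * ‖min 1 (‖z‖ ^ 2) * K z‖ := by
        rw [norm_mul, Real.norm_of_nonneg (by positivity), Real.norm_eq_abs, mul_assoc]

/-- Only truncated integrals of `secondDiff u` appear: the full one need not converge where `u` is
not `C²`. -/
theorem integral_mul_le_of_eventually_le_setIntegral_secondDiff [Nontrivial E]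
    (hK : IsLevyKernel K μ) (hφ : ContDiff ℝ 2 φ) (hsupp : HasCompactSupport φ)
    (hφ0 : ∀ x, 0 ≤ φ x) (hu : Measurable u) {C : ℝ} (huC : ∀ x, |u x| ≤ C)
    (hg : Integrable (fun x => φ x * g x) μ)
    (h : ∀ᶠ ε in 𝓝[>] 0, ∀ x, g x ≤ ∫ z in {z | ε < ‖z‖}, secondDiff u x z * K z ∂μ) :
    ∫ x, φ x * g x ∂μ ≤ ∫ x, u x * ∫ z, secondDiff φ x z * K z ∂μ ∂μ := by
  have hi : Integrable φ μ := hφ.continuous.integrable_of_hasCompactSupport hsupp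
  have hprod : Integrable (fun p : E × E => u p.1 * (secondDiff φ p.1 p.2 * K p.2))
      (μ.prod μ) :=
    (hK.integrable_secondDiff_mul hφ hsupp).bdd_mul
      (hu.comp measurable_fst).aestronglyMeasurable (.of_forall fun p => huC p.1)
  simp only [← integral_const_mul]
  rw [integral_integral_swap hprod]
  refine ge_of_tendsto (aecover_lt_norm.integral_tendsto_of_countably_generated
    hprod.integral_prod_right) ?_
  filter_upwards [h, self_mem_nhdsWithin] with ε hε hε0
  have hKε := hK.integrableOn_lt_norm hε0
  rw [integral_integral_mul_secondDiff_comm hi hu huC hKε]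
  refine integral_mono hg ?_ fun x => mul_le_mul_of_nonneg_left (hε x) (hφ0 x)
  simpa only [integral_const_mul] using
    (integrable_prod_mul_secondDiff hi hu huC hKε).integral_prod_left

end LevyKernel

section FractionalKernel

variable {E : Type*} [NormedAddCommGroup E] [NormedSpace ℝ E] {s : ℝ}

/-- The kernel `|z|^(-d-2s)`, `d = dim E`, of the fractional Laplacian of order `2s` without its
normalizing constant. It takes the junk value `0` at the origin when `d + 2s ≠ 0`. -/
def fracKernel (s : ℝ) (z : E) : ℝ := ‖z‖ ^ (-(finrank ℝ E : ℝ) - 2 * s)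

lemma fracKernel_nonneg (s : ℝ) (z : E) : 0 ≤ fracKernel s z := by unfold fracKernel; positivity

lemma fracKernel_neg (s : ℝ) (z : E) : fracKernel s (-z) = fracKernel s z := by simp [fracKernel]

lemma fracKernel_le_of_le_norm (hs : 0 < s) {z : E} {r : ℝ} (hr : 0 < r) (hz : r ≤ ‖z‖) :
    fracKernel s z ≤ r ^ (-(finrank ℝ E : ℝ) - 2 * s) :=
  Real.rpow_le_rpow_of_nonpos hr hz (by linarith [Nat.cast_nonneg (α := ℝ) (finrank ℝ E)])

lemma le_fracKernel_of_norm_le (hs : 0 < s) {z : E} {r : ℝ} (hz0 : 0 < ‖z‖) (hz : ‖z‖ ≤ r) :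
    r ^ (-(finrank ℝ E : ℝ) - 2 * s) ≤ fracKernel s z :=
  Real.rpow_le_rpow_of_nonpos hz0 hz (by linarith [Nat.cast_nonneg (α := ℝ) (finrank ℝ E)])

variable [MeasurableSpace E] [BorelSpace E] {μ : Measure E}

lemma measurable_fracKernel (s : ℝ) : Measurable (fracKernel s : E → ℝ) := by
  unfold fracKernel
  fun_prop

variable [FiniteDimensional ℝ E] [μ.IsAddHaarMeasure] {ε : ℝ}

lemma integrableOn_fracKernel_lt_norm (hs : 0 < s) (hε : 0 < ε) :
    IntegrableOn (fracKernel s) {z : E | ε < ‖z‖} μ := by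
  set r := (finrank ℝ E : ℝ) + 2 * s with hr
  have hdom : IntegrableOn (fun z : E => (ε / (1 + ε)) ^ (-r) * (1 + ‖z‖) ^ (-r))
      {z | ε < ‖z‖} μ :=
    ((integrable_one_add_norm (by linarith)).const_mul _).integrableOn
  refine hdom.mono' (measurable_fracKernel s).aestronglyMeasurable
    ((ae_restrict_iff' (measurableSet_lt_norm ε)).2 (.of_forall fun z hz => ?_))
  have hz : ε < ‖z‖ := hz
  rw [Real.norm_of_nonneg (fracKernel_nonneg s z), fracKernel, ← neg_add', ← hr,
    ← Real.mul_rpow (by positivity) (by positivity)]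
  refine Real.rpow_le_rpow_of_nonpos (by positivity) ?_ (neg_nonpos.2 (by positivity))
  rw [div_mul_eq_mul_div, div_le_iff₀ (by positivity)]
  linarith

lemma integrableOn_fracKernel_sub (hs : 0 < s) (hε : 0 < ε) (a : E) :
    IntegrableOn (fun w => fracKernel s (w - a)) {w | ε < ‖w - a‖} μ :=
  ((measurePreserving_sub_right μ a).integrableOn_comp_preimage
    (MeasurableEquiv.subRight a).measurableEmbedding).2 (integrableOn_fracKernel_lt_norm hs hε)

theorem isLevyKernel_fracKernel [Nontrivial E] (hs₀ : 0 < s) (hs₁ : s < 1) :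
    IsLevyKernel (fracKernel s : E → ℝ) μ := by
  have hmeas : AEStronglyMeasurable (fun z : E => min 1 (‖z‖ ^ 2) * fracKernel s z) μ :=
    ((by fun_prop : Measurable fun z : E => min 1 (‖z‖ ^ 2)).mul
      (measurable_fracKernel s)).aestronglyMeasurable
  have hnorm : ∀ z : E, ‖min 1 (‖z‖ ^ 2) * fracKernel s z‖ = min 1 (‖z‖ ^ 2) * fracKernel s z :=
    fun z => Real.norm_of_nonneg (mul_nonneg (by positivity) (fracKernel_nonneg s z))
  have hnear : IntegrableOn (fun z : E => min 1 (‖z‖ ^ 2) * fracKernel s z) (ball 0 2) μ := by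
    refine integrableOn_ball_of_norm_le_rpow (C := 1) (α := finrank ℝ E + 2 * s - 2)
      Module.finrank_pos (by linarith) (.of_forall fun z => ?_) hmeas
    rw [hnorm, one_mul]
    rcases eq_or_ne z 0 with rfl | hz
    · simpa using Real.rpow_nonneg le_rfl _
    · calc min 1 (‖z‖ ^ 2) * fracKernel s z ≤ ‖z‖ ^ 2 * fracKernel s z :=
            mul_le_mul_of_nonneg_right (min_le_right _ _) (fracKernel_nonneg s z)
        _ = ‖z‖ ^ (-((finrank ℝ E : ℝ) + 2 * s - 2)) := by
            rw [fracKernel, ← Real.rpow_natCast, ← Real.rpow_add (norm_pos_iff.2 hz)]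
            push_cast
            ring_nf
  have hfar : IntegrableOn (fun z : E => min 1 (‖z‖ ^ 2) * fracKernel s z) {z | 1 < ‖z‖} μ :=
    (integrableOn_fracKernel_lt_norm hs₀ one_pos).mono' hmeas.restrict (.of_forall fun z => by
      rw [hnorm]
      exact mul_le_of_le_one_left (fracKernel_nonneg s z) (min_le_left _ _))
  refine (integrableOn_univ.1 ((hnear.union hfar).mono_set fun z _ => ?_))
  rcases lt_or_ge ‖z‖ 2 with hz | hz
  · exact Or.inl (mem_ball_zero_iff.2 hz)
  · exact Or.inr (one_lt_two.trans_le hz)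

end FractionalKernel

section Inversion

open EuclideanGeometry

variable {E : Type*} [NormedAddCommGroup E] [InnerProductSpace ℝ E]

lemma norm_inversion_zero (R : ℝ) (w : E) : ‖inversion 0 R w‖ = R ^ 2 / ‖w‖ := by
  simpa using dist_inversion_center (0 : E) w R

lemma norm_inversion_zero_sub {a w : E} (ha : a ≠ 0) (hw : w ≠ 0) :
    ‖inversion 0 ‖a‖ w - a‖ = ‖a‖ / ‖w‖ * ‖w - a‖ := by
  have hfix : inversion 0 ‖a‖ a = a := inversion_of_mem_sphere (by simp)
  have h := dist_inversion_inversion hw ha ‖a‖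
  rw [hfix, dist_zero_right, dist_zero_right, dist_eq_norm, dist_eq_norm] at h
  rw [h]
  field_simp

lemma abs_det_smul_reflection [FiniteDimensional ℝ E] (r : ℝ) (V : Submodule ℝ E) :
    |(r • (V.reflection : E →L[ℝ] E)).det| = |r| ^ finrank ℝ E := by
  have hrefl : LinearMap.det ((V.reflection : E →L[ℝ] E) : E →ₗ[ℝ] E) =
      (-1) ^ finrank ℝ Vᗮ := V.det_reflection
  rw [ContinuousLinearMap.det, ContinuousLinearMap.toLinearMap_smul, LinearMap.det_smul, hrefl,
    abs_mul, abs_pow, abs_pow, abs_neg, abs_one, one_pow, mul_one]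

/-- The pullback of the density `f dw` under the inversion in the sphere of radius `R` about `0`;
`(R / |w|)^(2d)` is the Jacobian. -/
def kelvinPullback (R : ℝ) (f : E → ℝ) (w : E) : ℝ :=
  (R / ‖w‖) ^ (2 * finrank ℝ E) * f (inversion 0 R w)

lemma hasFDerivWithinAt_inversion_preimage {R : ℝ} {S : Set E}
    (hS0 : (0 : E) ∉ S) :
    ∀ w ∈ inversion 0 R ⁻¹' S, HasFDerivWithinAt (inversion 0 R)
      ((R / dist w 0) ^ 2 • ((ℝ ∙ (w - 0))ᗮ.reflection : E →L[ℝ] E)) (inversion 0 R ⁻¹' S) w := by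
  refine fun w hw => (hasFDerivAt_inversion ?_).hasFDerivWithinAt
  rintro rfl
  exact hS0 (by simpa using hw)

lemma abs_det_fderiv_inversion_mul [FiniteDimensional ℝ E] (R : ℝ) (f : E → ℝ) (w : E) :
    |((R / dist w 0) ^ 2 • ((ℝ ∙ (w - 0))ᗮ.reflection : E →L[ℝ] E)).det| •
      f (inversion 0 R w) = kelvinPullback R f w := by
  rw [abs_det_smul_reflection, abs_of_nonneg (sq_nonneg _), dist_zero_right, smul_eq_mul,
    kelvinPullback, pow_mul]

lemma subset_preimage_inversion_diff_ball {a : E} (ha : a ≠ 0) (ε : ℝ) :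
    ({w | ε < ‖w - a‖} ∩ ball 0 ‖a‖) \ {0} ⊆
      inversion 0 ‖a‖ ⁻¹' ({w | ε < ‖w - a‖} \ ball 0 ‖a‖) := by
  rintro w ⟨⟨hεw, hwa⟩, hw0 : w ≠ 0⟩
  have hεw : ε < ‖w - a‖ := hεw
  have hwa : ‖w‖ < ‖a‖ := by simpa using hwa
  have hw : 0 < ‖w‖ := norm_pos_iff.2 hw0
  have hratio : 1 ≤ ‖a‖ / ‖w‖ := (one_le_div₀ hw).2 hwa.le
  constructor
  · change ε < ‖inversion 0 ‖a‖ w - a‖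
    rw [norm_inversion_zero_sub ha hw0]
    exact hεw.trans_le (le_mul_of_one_le_left (norm_nonneg _) hratio)
  · rw [mem_ball_zero_iff, norm_inversion_zero, not_lt, le_div_iff₀ hw, sq]
    gcongr

variable [MeasurableSpace E] [BorelSpace E]

lemma measurable_inversion_zero [SecondCountableTopology E] (R : ℝ) :
    Measurable (inversion (0 : E) R) := by
  unfold inversion
  simp only [vsub_eq_sub, vadd_eq_add]
  fun_prop

variable [FiniteDimensional ℝ E] {μ : Measure E} [μ.IsAddHaarMeasure] {R : ℝ} {S : Set E}
  {f : E → ℝ}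

lemma setIntegral_preimage_kelvinPullback (hR : R ≠ 0) (hS : MeasurableSet S) (hS0 : (0 : E) ∉ S) :
    ∫ w in inversion 0 R ⁻¹' S, kelvinPullback R f w ∂μ = ∫ w in S, f w ∂μ := by
  have h := integral_image_eq_integral_abs_det_fderiv_smul μ (measurable_inversion_zero R hS)
    (hasFDerivWithinAt_inversion_preimage hS0) (inversion_injective 0 hR).injOn f
  simp only [abs_det_fderiv_inversion_mul,
    Set.image_preimage_eq S (inversion_surjective (0 : E) hR)] at h
  exact h.symm

lemma integrableOn_preimage_kelvinPullback_iff (hR : R ≠ 0) (hS : MeasurableSet S)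
    (hS0 : (0 : E) ∉ S) :
    IntegrableOn (kelvinPullback R f) (inversion 0 R ⁻¹' S) μ ↔ IntegrableOn f S μ := by
  have h := integrableOn_image_iff_integrableOn_abs_det_fderiv_smul μ
    (measurable_inversion_zero R hS) (hasFDerivWithinAt_inversion_preimage hS0)
    (inversion_injective 0 hR).injOn f
  simp only [abs_det_fderiv_inversion_mul,
    Set.image_preimage_eq S (inversion_surjective (0 : E) hR)] at h
  exact h.symm

lemma inter_ball_ae_le_preimage_inversion {a : E} (ha : a ≠ 0) (ε : ℝ) :
    ({w | ε < ‖w - a‖} ∩ ball 0 ‖a‖ : Set E) ≤ᵐ[μ]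
      inversion 0 ‖a‖ ⁻¹' ({w | ε < ‖w - a‖} \ ball 0 ‖a‖) := by
  have : Nontrivial E := ⟨a, 0, ha⟩
  exact (sdiff_null_ae_eq_self (measure_singleton 0)).symm.le.trans
    (subset_preimage_inversion_diff_ball ha ε).eventuallyLE

lemma integrableOn_kelvinPullback {a : E} (ha : a ≠ 0) {ε : ℝ}
    (hf : IntegrableOn f {w | ε < ‖w - a‖} μ) :
    IntegrableOn (kelvinPullback ‖a‖ f) ({w | ε < ‖w - a‖} ∩ ball 0 ‖a‖) μ :=
  ((integrableOn_preimage_kelvinPullback_iff (norm_ne_zero_iff.2 ha)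
    ((measurableSet_lt_norm_sub ε a).diff measurableSet_ball) fun h => h.2 (by simpa using ha)).2
    (hf.mono_set Set.sdiff_subset)).mono_set_ae (inter_ball_ae_le_preimage_inversion ha ε)

theorem setIntegral_add_kelvinPullback_le {a : E} (ha : a ≠ 0) {ε : ℝ} {P : Set E}
    (hP : P ⊆ {w | ε < ‖w - a‖} ∩ ball 0 ‖a‖) (hf : IntegrableOn f {w | ε < ‖w - a‖} μ)
    (hfar : ∀ w, ‖a‖ ≤ ‖w‖ → 0 ≤ f w)
    (hnear : ∀ w, w ≠ 0 → ‖w‖ < ‖a‖ → 0 ≤ f w + kelvinPullback ‖a‖ f w) :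
    ∫ w in P, (f w + kelvinPullback ‖a‖ f w) ∂μ ≤ ∫ w in {w | ε < ‖w - a‖}, f w ∂μ := by
  have : Nontrivial E := ⟨a, 0, ha⟩
  set A : Set E := {w | ε < ‖w - a‖}
  set F := kelvinPullback ‖a‖ f
  set T := inversion 0 ‖a‖ ⁻¹' (A \ ball 0 ‖a‖)
  have hA : MeasurableSet A := measurableSet_lt_norm_sub ε a
  have hnorm : ‖a‖ ≠ 0 := norm_ne_zero_iff.2 ha
  have hfar_meas : MeasurableSet (A \ ball 0 ‖a‖) := hA.diff measurableSet_ball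
  have hzero : (0 : E) ∉ A \ ball 0 ‖a‖ := fun h => h.2 (by simpa using ha)
  have hT : MeasurableSet T := measurable_inversion_zero _ hfar_meas
  have hFT : IntegrableOn F T μ :=
    (integrableOn_preimage_kelvinPullback_iff hnorm hfar_meas hzero).2
      (hf.mono_set Set.sdiff_subset)
  have hfnear : IntegrableOn f (A ∩ ball 0 ‖a‖) μ := hf.mono_set Set.inter_subset_left
  have hFnear : IntegrableOn F (A ∩ ball 0 ‖a‖) μ := integrableOn_kelvinPullback ha hf
  have hFT0 : ∀ w ∈ T, 0 ≤ F w := fun w hw =>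
    mul_nonneg (by positivity) (hfar _ (by simpa using hw.2))
  calc ∫ w in P, (f w + F w) ∂μ
      ≤ ∫ w in A ∩ ball 0 ‖a‖, (f w + F w) ∂μ := by
        refine setIntegral_mono_set (hfnear.add hFnear) ?_ hP.eventuallyLE
        rw [Filter.EventuallyLE, ae_restrict_iff' (hA.inter measurableSet_ball)]
        filter_upwards [compl_mem_ae_iff.2 (measure_singleton (0 : E))] with w hw0 hw
        exact hnear w hw0 (by simpa using hw.2)
    _ = ∫ w in A ∩ ball 0 ‖a‖, f w ∂μ + ∫ w in A ∩ ball 0 ‖a‖, F w ∂μ :=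
        integral_add hfnear hFnear
    _ ≤ ∫ w in A ∩ ball 0 ‖a‖, f w ∂μ + ∫ w in T, F w ∂μ := by
        exact add_le_add le_rfl (setIntegral_mono_set hFT
          ((ae_restrict_iff' hT).2 (.of_forall hFT0)) (inter_ball_ae_le_preimage_inversion ha ε))
    _ = ∫ w in A ∩ ball 0 ‖a‖, f w ∂μ + ∫ w in A \ ball 0 ‖a‖, f w ∂μ := by
        rw [setIntegral_preimage_kelvinPullback hnorm hfar_meas hzero]
    _ = ∫ w in A, f w ∂μ := integral_inter_add_sdiff measurableSet_ball hf

end Inversion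

section NormPower

open EuclideanGeometry

variable {E : Type*} [NormedAddCommGroup E] {s β : ℝ}

/-- The integrand of the fractional Laplacian of `|·|^(-β)` at the point `a`. -/
def fracIntegrand [NormedSpace ℝ E] (s β : ℝ) (a w : E) : ℝ :=
  (‖a‖ ^ (-β) - ‖w‖ ^ (-β)) * fracKernel s (w - a)

lemma fracIntegrand_nonneg [NormedSpace ℝ E] (hβ : 0 ≤ β) {a w : E} (ha : a ≠ 0)
    (haw : ‖a‖ ≤ ‖w‖) : 0 ≤ fracIntegrand s β a w :=
  mul_nonneg (sub_nonneg.2 (Real.rpow_le_rpow_of_nonpos (norm_pos_iff.2 ha) haw (by linarith)))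
    (fracKernel_nonneg s _)

lemma fracKernel_inversion_sub [InnerProductSpace ℝ E] (s : ℝ) {a w : E} (ha : a ≠ 0)
    (hw : w ≠ 0) :
    (‖a‖ / ‖w‖) ^ (2 * finrank ℝ E) * fracKernel s (inversion 0 ‖a‖ w - a) =
      (‖a‖ / ‖w‖) ^ ((finrank ℝ E : ℝ) - 2 * s) * fracKernel s (w - a) := by
  have hτ : 0 < ‖a‖ / ‖w‖ := div_pos (norm_pos_iff.2 ha) (norm_pos_iff.2 hw)
  rw [fracKernel, fracKernel, norm_inversion_zero_sub ha hw, Real.mul_rpow hτ.le (norm_nonneg _),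
    ← mul_assoc, ← Real.rpow_natCast, ← Real.rpow_add hτ]
  push_cast
  ring_nf

/-- With `τ = |a| / |w|`, the sum factors because `|·|^(-β)` and its Kelvin transform, a multiple
of `|·|^(-(d-2s-β))`, play symmetric roles. -/
lemma fracIntegrand_add_kelvinPullback [InnerProductSpace ℝ E] (s β : ℝ) {a w : E} (ha : a ≠ 0)
    (hw : w ≠ 0) :
    fracIntegrand s β a w + kelvinPullback ‖a‖ (fracIntegrand s β a) w =
      ‖a‖ ^ (-β) * fracKernel s (w - a) * (((‖a‖ / ‖w‖) ^ β - 1) *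
        ((‖a‖ / ‖w‖) ^ ((finrank ℝ E : ℝ) - 2 * s - β) - 1)) := by
  have ha' : 0 < ‖a‖ := norm_pos_iff.2 ha
  have hw' : 0 < ‖w‖ := norm_pos_iff.2 hw
  have hpull : kelvinPullback ‖a‖ (fracIntegrand s β a) w =
      (‖a‖ ^ (-β) - (‖a‖ ^ 2 / ‖w‖) ^ (-β)) *
        ((‖a‖ / ‖w‖) ^ ((finrank ℝ E : ℝ) - 2 * s) * fracKernel s (w - a)) := by
    rw [kelvinPullback, fracIntegrand, norm_inversion_zero, mul_left_comm,
      fracKernel_inversion_sub s ha hw]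
  rw [hpull, fracIntegrand]
  obtain ⟨τ, hτ, hw_eq⟩ : ∃ τ, 0 < τ ∧ ‖w‖ = ‖a‖ / τ :=
    ⟨‖a‖ / ‖w‖, div_pos ha' hw', by field_simp⟩
  have hτ_eq : ‖a‖ / (‖a‖ / τ) = τ := by field_simp
  have hinv : ‖a‖ ^ 2 / (‖a‖ / τ) = ‖a‖ * τ := by field_simp
  have hpow : τ ^ ((finrank ℝ E : ℝ) - 2 * s) =
      τ ^ β * τ ^ ((finrank ℝ E : ℝ) - 2 * s - β) := by
    rw [← Real.rpow_add hτ]; ring_nf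
  have hcancel : τ ^ (-β) * τ ^ β = 1 := by rw [← Real.rpow_add hτ]; simp
  have hdiv : (‖a‖ / τ) ^ (-β) = ‖a‖ ^ (-β) * τ ^ β := by
    rw [Real.div_rpow ha'.le hτ.le, Real.rpow_neg hτ.le, div_inv_eq_mul]
  rw [hw_eq, hτ_eq, hinv, hdiv, Real.mul_rpow ha'.le hτ.le, hpow]
  linear_combination -(‖a‖ ^ (-β) * fracKernel s (w - a) *
    τ ^ ((finrank ℝ E : ℝ) - 2 * s - β)) * hcancel

lemma fracIntegrand_add_kelvinPullback_nonneg [InnerProductSpace ℝ E] (hβ : 0 ≤ β)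
    (hβd : β ≤ finrank ℝ E - 2 * s) {a w : E} (hw : w ≠ 0) (hwa : ‖w‖ ≤ ‖a‖) :
    0 ≤ fracIntegrand s β a w + kelvinPullback ‖a‖ (fracIntegrand s β a) w := by
  have hw' : 0 < ‖w‖ := norm_pos_iff.2 hw
  have hτ : 1 ≤ ‖a‖ / ‖w‖ := (one_le_div₀ hw').2 hwa
  rw [fracIntegrand_add_kelvinPullback s β (norm_pos_iff.1 (hw'.trans_le hwa)) hw]
  exact mul_nonneg (mul_nonneg (by positivity) (fracKernel_nonneg s _))
    (mul_nonneg (sub_nonneg.2 (Real.one_le_rpow hτ hβ))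
      (sub_nonneg.2 (Real.one_le_rpow hτ (by linarith))))

lemma le_fracIntegrand_add_kelvinPullback [InnerProductSpace ℝ E] (hs : 0 < s)
    (hβ : 0 ≤ β) (hβd : β ≤ finrank ℝ E - 2 * s) {a w : E} (hw : w ≠ 0) (hwa : ‖w‖ ≤ ‖a‖ / 2) :
    ‖a‖ ^ (-β) * (3 / 2 * ‖a‖) ^ (-(finrank ℝ E : ℝ) - 2 * s) *
      ((2 ^ β - 1) * (2 ^ ((finrank ℝ E : ℝ) - 2 * s - β) - 1)) ≤
      fracIntegrand s β a w + kelvinPullback ‖a‖ (fracIntegrand s β a) w := by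
  have hw' : 0 < ‖w‖ := norm_pos_iff.2 hw
  have ha : a ≠ 0 := norm_pos_iff.1 (by linarith)
  have hτ : 2 ≤ ‖a‖ / ‖w‖ := (le_div_iff₀ hw').2 (by linarith)
  have hγ : 0 ≤ (finrank ℝ E : ℝ) - 2 * s - β := by linarith
  have h₁ : (1 : ℝ) ≤ 2 ^ β := Real.one_le_rpow one_le_two hβ
  have h₂ : (1 : ℝ) ≤ 2 ^ ((finrank ℝ E : ℝ) - 2 * s - β) := Real.one_le_rpow one_le_two hγ
  have h₁' : (2 : ℝ) ^ β ≤ (‖a‖ / ‖w‖) ^ β := by gcongr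
  have hdist : ‖a‖ - ‖w‖ ≤ ‖w - a‖ := norm_sub_rev a w ▸ norm_sub_norm_le a w
  have hK : (3 / 2 * ‖a‖) ^ (-(finrank ℝ E : ℝ) - 2 * s) ≤ fracKernel s (w - a) :=
    le_fracKernel_of_norm_le hs (by linarith) (by linarith [norm_sub_le w a])
  rw [fracIntegrand_add_kelvinPullback s β ha hw]
  have : (0 : ℝ) ≤ 2 ^ ((finrank ℝ E : ℝ) - 2 * s - β) - 1 := sub_nonneg.2 h₂
  have : 0 ≤ (‖a‖ / ‖w‖) ^ β - 1 := by linarith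
  have : 0 ≤ fracKernel s (w - a) := fracKernel_nonneg s _
  gcongr

lemma ball_half_norm_subset {a : E} {ε : ℝ} (hε : ε < ‖a‖ / 2) :
    ball 0 (‖a‖ / 2) ⊆ {w | ε < ‖w - a‖} ∩ ball 0 ‖a‖ := fun w hw => by
  have hw : ‖w‖ < ‖a‖ / 2 := by simpa using hw
  have : ‖a‖ - ‖w‖ ≤ ‖w - a‖ := norm_sub_rev a w ▸ norm_sub_norm_le a w
  exact ⟨show ε < ‖w - a‖ by linarith, by
    rw [mem_ball_zero_iff]; linarith [norm_nonneg w]⟩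

variable [MeasurableSpace E] [BorelSpace E] {μ : Measure E}

lemma integrableOn_fracIntegrand [NormedSpace ℝ E] [FiniteDimensional ℝ E] [μ.IsAddHaarMeasure]
    (hs : 0 < s) (hβ : 0 ≤ β) (hβd : β < finrank ℝ E) (a : E)
    {ε : ℝ} (hε : 0 < ε) : IntegrableOn (fracIntegrand s β a) {w | ε < ‖w - a‖} μ := by
  have hd : 0 < finrank ℝ E := by exact_mod_cast hβ.trans_lt hβd
  have hA := measurableSet_lt_norm_sub ε a
  have hK : IntegrableOn (fun w => fracKernel s (w - a)) {w | ε < ‖w - a‖} μ :=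
    integrableOn_fracKernel_sub hs hε a
  have hpow : Measurable fun w : E => ‖w‖ ^ (-β) := by fun_prop
  have hshift : Measurable fun w : E => fracKernel s (w - a) :=
    (measurable_fracKernel s).comp (measurable_sub_const a)
  have hball : IntegrableOn (fun w : E => ‖w‖ ^ (-β)) (ball 0 1) μ :=
    integrableOn_ball_of_norm_le_rpow (α := β) (C := 1) hd hβd
      (.of_forall fun w => by rw [Real.norm_of_nonneg (by positivity), one_mul])
      hpow.aestronglyMeasurable
  have hnear : IntegrableOn (fun w => ‖w‖ ^ (-β) * fracKernel s (w - a))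
      ({w | ε < ‖w - a‖} ∩ ball 0 1) μ := by
    refine (hball.mono_set Set.inter_subset_right).mul_bdd
      (c := ε ^ (-(finrank ℝ E : ℝ) - 2 * s)) hshift.aestronglyMeasurable
      ((ae_restrict_iff' (hA.inter measurableSet_ball)).2 (.of_forall fun w hw => ?_))
    rw [Real.norm_of_nonneg (fracKernel_nonneg s _)]
    exact fracKernel_le_of_le_norm hs hε (le_of_lt hw.1)
  have hfar : IntegrableOn (fun w => ‖w‖ ^ (-β) * fracKernel s (w - a))
      ({w | ε < ‖w - a‖} \ ball 0 1) μ := by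
    refine (hK.mono_set Set.sdiff_subset).bdd_mul (c := 1) hpow.aestronglyMeasurable
      ((ae_restrict_iff' (hA.diff measurableSet_ball)).2 (.of_forall fun w hw => ?_))
    rw [Real.norm_of_nonneg (by positivity)]
    exact Real.rpow_le_one_of_one_le_of_nonpos (by simpa using hw.2) (by linarith)
  have hprod := (hnear.union hfar).mono_set (Set.inter_union_sdiff _ _).ge
  exact ((hK.const_mul (‖a‖ ^ (-β))).sub hprod).congr (.of_forall fun w => by
    simp only [Pi.sub_apply, fracIntegrand, sub_mul])

variable [InnerProductSpace ℝ E] [FiniteDimensional ℝ E] [μ.IsAddHaarMeasure]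

lemma mul_measureReal_ball_le_setIntegral_fracIntegrand (hs : 0 < s)
    (hβ : 0 < β) (hβd : β < finrank ℝ E - 2 * s) {a : E} {ε : ℝ} (hε : 0 < ε)
    (hεa : ε < ‖a‖ / 2) :
    ‖a‖ ^ (-β) * (3 / 2 * ‖a‖) ^ (-(finrank ℝ E : ℝ) - 2 * s) *
      ((2 ^ β - 1) * (2 ^ ((finrank ℝ E : ℝ) - 2 * s - β) - 1)) * μ.real (ball 0 (‖a‖ / 2)) ≤
      ∫ w in {w | ε < ‖w - a‖}, fracIntegrand s β a w ∂μ := by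
  have ha : a ≠ 0 := norm_pos_iff.1 (by linarith)
  have : Nontrivial E := ⟨a, 0, ha⟩
  set f := fracIntegrand s β a
  have hf : IntegrableOn f {w | ε < ‖w - a‖} μ :=
    integrableOn_fracIntegrand hs hβ.le (by linarith) a hε
  have hsum : IntegrableOn (fun w => f w + kelvinPullback ‖a‖ f w) (ball 0 (‖a‖ / 2)) μ :=
    ((hf.mono_set Set.inter_subset_left).add (integrableOn_kelvinPullback ha hf)).mono_set
      (ball_half_norm_subset hεa)
  calc _ = ∫ _ in ball (0 : E) (‖a‖ / 2),
        ‖a‖ ^ (-β) * (3 / 2 * ‖a‖) ^ (-(finrank ℝ E : ℝ) - 2 * s) *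
          ((2 ^ β - 1) * (2 ^ ((finrank ℝ E : ℝ) - 2 * s - β) - 1)) ∂μ := by
        rw [setIntegral_const, smul_eq_mul, mul_comm]
    _ ≤ ∫ w in ball 0 (‖a‖ / 2), (f w + kelvinPullback ‖a‖ f w) ∂μ := by
        refine setIntegral_mono_on_ae (integrableOn_const measure_ball_lt_top.ne) hsum
          measurableSet_ball ?_
        filter_upwards [compl_mem_ae_iff.2 (measure_singleton (0 : E))] with w hw0 hw
        exact le_fracIntegrand_add_kelvinPullback hs hβ.le hβd.le hw0
          (mem_ball_zero_iff.1 hw).le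
    _ ≤ ∫ w in {w | ε < ‖w - a‖}, f w ∂μ :=
        setIntegral_add_kelvinPullback_le ha (ball_half_norm_subset hεa) hf
          (fun w hw => fracIntegrand_nonneg hβ.le ha hw)
          fun w hw0 hw => fracIntegrand_add_kelvinPullback_nonneg hβ.le hβd.le hw0 hw.le

theorem exists_pos_mul_le_setIntegral_fracIntegrand (hs : 0 < s)
    (hβ : 0 < β) (hβd : β < finrank ℝ E - 2 * s) :
    ∃ κ > 0, ∀ a : E, ∀ ε > 0, ε < ‖a‖ / 2 →
      κ * ‖a‖ ^ (-β - 2 * s) ≤ ∫ w in {w | ε < ‖w - a‖}, fracIntegrand s β a w ∂μ := by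
  set d := (finrank ℝ E : ℝ) with hd
  have h₁ : 0 < (2 : ℝ) ^ β - 1 := sub_pos.2 (Real.one_lt_rpow one_lt_two hβ)
  have h₂ : 0 < (2 : ℝ) ^ (d - 2 * s - β) - 1 :=
    sub_pos.2 (Real.one_lt_rpow one_lt_two (by linarith))
  have hunit : 0 < μ.real (ball (0 : E) 1) :=
    ENNReal.toReal_pos (measure_ball_pos μ 0 one_pos).ne' measure_ball_lt_top.ne
  refine ⟨(3 / 2) ^ (-d - 2 * s) * ((2 ^ β - 1) * (2 ^ (d - 2 * s - β) - 1)) *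
    ((1 / 2) ^ finrank ℝ E * μ.real (ball (0 : E) 1)), by positivity, fun a ε hε hεa => ?_⟩
  have ha : 0 < ‖a‖ := by linarith
  have hscale : ‖a‖ ^ (-β - 2 * s) = ‖a‖ ^ (-β) * ‖a‖ ^ (-d - 2 * s) * ‖a‖ ^ finrank ℝ E := by
    rw [← Real.rpow_natCast, ← Real.rpow_add ha, ← Real.rpow_add ha]; congr 1; ring
  have hball : μ.real (ball (0 : E) (‖a‖ / 2)) =
      (‖a‖ * (1 / 2)) ^ finrank ℝ E * μ.real (ball (0 : E) 1) := by
    rw [← div_eq_mul_one_div, measureReal_def, Measure.addHaar_ball_of_pos μ 0 (half_pos ha),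
      ENNReal.toReal_mul, ENNReal.toReal_ofReal (by positivity), measureReal_def]
  refine (mul_measureReal_ball_le_setIntegral_fracIntegrand hs hβ hβd hε hεa).trans_eq' ?_
  rw [← hd, hball, hscale, Real.mul_rpow (by norm_num) ha.le, mul_pow]
  ring

end NormPower

section DecayProfile

/-- The profile `(1 + |x|)^(-β)` of the supersolution: a bounded substitute for the norm power
`|x|^(-β)` with the same decay. -/
def decayProfile {E : Type*} [NormedAddCommGroup E] (β : ℝ) (x : E) : ℝ := (1 + ‖x‖) ^ (-β)

variable {E : Type*} [NormedAddCommGroup E] {s β : ℝ}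

lemma decayProfile_pos (β : ℝ) (x : E) : 0 < decayProfile β x := by
  unfold decayProfile; positivity

lemma abs_decayProfile_le_one (hβ : 0 ≤ β) (x : E) : |decayProfile β x| ≤ 1 := by
  rw [abs_of_pos (decayProfile_pos β x)]
  exact Real.rpow_le_one_of_one_le_of_nonpos (by linarith [norm_nonneg x]) (by linarith)

lemma continuous_decayProfile (β : ℝ) : Continuous (decayProfile β : E → ℝ) :=
  Continuous.rpow_const (by fun_prop) fun x => Or.inl (by positivity)

lemma decayProfile_rpow (β q : ℝ) (x : E) : decayProfile β x ^ q = decayProfile (β * q) x := by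
  rw [decayProfile, decayProfile, ← Real.rpow_mul (by positivity), neg_mul]

variable [NormedSpace ℝ E]

lemma exists_norm_eq_one_and_norm_add_eq [Nontrivial E] (x : E) :
    ∃ e : E, ‖e‖ = 1 ∧ ‖x + e‖ = 1 + ‖x‖ := by
  obtain ⟨e, he, hray⟩ : ∃ e : E, ‖e‖ = 1 ∧ SameRay ℝ x e := by
    rcases eq_or_ne x 0 with rfl | hx
    · obtain ⟨e, he⟩ := exists_norm_eq E zero_le_one
      exact ⟨e, he, .zero_left e⟩
    · exact ⟨‖x‖⁻¹ • x, norm_smul_inv_norm hx, SameRay.sameRay_nonneg_smul_right x (by positivity)⟩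
  exact ⟨e, he, by rw [hray.norm_add, he, add_comm]⟩

lemma fracIntegrand_le_decayProfile (hβ : 0 ≤ β) {x e w : E} (he : ‖e‖ = 1)
    (hxe : ‖x + e‖ = 1 + ‖x‖) (hw : w ≠ 0) :
    fracIntegrand s β (x + e) w ≤
      (decayProfile β x - decayProfile β (x + (w - (x + e)))) * fracKernel s (w - (x + e)) := by
  refine mul_le_mul_of_nonneg_right ?_ (fracKernel_nonneg s _)
  rw [hxe]
  refine sub_le_sub_left (Real.rpow_le_rpow_of_nonpos (norm_pos_iff.2 hw) ?_ (by linarith)) _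
  calc ‖w‖ = ‖e + (x + (w - (x + e)))‖ := by congr 1; abel
    _ ≤ 1 + ‖x + (w - (x + e))‖ := he ▸ norm_add_le _ _

variable [MeasurableSpace E] [BorelSpace E] [FiniteDimensional ℝ E] {μ : Measure E}
  [μ.IsAddHaarMeasure]

lemma integrableOn_decayProfile_sub_mul (hs : 0 < s) (hβ : 0 ≤ β) (x : E) {ε : ℝ}
    (hε : 0 < ε) :
    IntegrableOn (fun z => (decayProfile β x - decayProfile β (x + z)) * fracKernel s z)
      {z | ε < ‖z‖} μ := by
  have hcont := continuous_decayProfile (E := E) β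
  have hdiff : Continuous fun z => decayProfile β x - decayProfile β (x + z) := by fun_prop
  refine (integrableOn_fracKernel_lt_norm hs hε).bdd_mul (c := 2)
    hdiff.aestronglyMeasurable (.of_forall fun z => (norm_sub_le _ _).trans ?_)
  linarith [abs_decayProfile_le_one hβ x, abs_decayProfile_le_one hβ (x + z),
    Real.norm_eq_abs (decayProfile β x), Real.norm_eq_abs (decayProfile β (x + z))]

end DecayProfile

section InnerDecayProfile

variable {E : Type*} [NormedAddCommGroup E] [InnerProductSpace ℝ E] [MeasurableSpace E]
  [BorelSpace E] [FiniteDimensional ℝ E] {μ : Measure E} [μ.IsAddHaarMeasure] {s β : ℝ}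

theorem exists_pos_mul_le_setIntegral_decayProfile (hs : 0 < s) (hβ : 0 < β)
    (hβd : β < finrank ℝ E - 2 * s) :
    ∃ κ > 0, ∀ x : E, ∀ ε > 0, ε < 1 / 2 → κ * decayProfile (β + 2 * s) x ≤
      ∫ z in {z | ε < ‖z‖}, (decayProfile β x - decayProfile β (x + z)) * fracKernel s z ∂μ := by
  have : Nontrivial E := Module.nontrivial_of_finrank_pos (R := ℝ)
    (by exact_mod_cast (by linarith : (0 : ℝ) < finrank ℝ E))
  obtain ⟨κ, hκ, hbound⟩ := exists_pos_mul_le_setIntegral_fracIntegrand (μ := μ) hs hβ hβd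
  refine ⟨κ, hκ, fun x ε hε hε_half => ?_⟩
  obtain ⟨e, he, hxe⟩ := exists_norm_eq_one_and_norm_add_eq x
  set g : E → ℝ := fun z => (decayProfile β x - decayProfile β (x + z)) * fracKernel s z
  have hshift := measurePreserving_sub_right μ (x + e)
  have hemb : MeasurableEmbedding (· - (x + e)) := (MeasurableEquiv.subRight _).measurableEmbedding
  calc κ * decayProfile (β + 2 * s) x = κ * ‖x + e‖ ^ (-β - 2 * s) := by
        rw [hxe, decayProfile, neg_add']
    _ ≤ ∫ w in {w | ε < ‖w - (x + e)‖}, fracIntegrand s β (x + e) w ∂μ :=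
        hbound _ ε hε (by rw [hxe]; linarith [norm_nonneg x])
    _ ≤ ∫ w in {w | ε < ‖w - (x + e)‖}, g (w - (x + e)) ∂μ := by
        refine setIntegral_mono_ae (integrableOn_fracIntegrand hs hβ.le (by linarith) _ hε)
          ((hshift.integrableOn_comp_preimage hemb).2
            (integrableOn_decayProfile_sub_mul hs hβ.le x hε)) ?_
        filter_upwards [compl_mem_ae_iff.2 (measure_singleton (0 : E))] with w hw
        exact fracIntegrand_le_decayProfile hβ.le he hxe hw
    _ = ∫ z in {z | ε < ‖z‖}, g z ∂μ := hshift.setIntegral_preimage_emb hemb g {z | ε < ‖z‖}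

theorem exists_pos_integral_mul_decayProfile_le (hs₀ : 0 < s) (hs₁ : s < 1) (hβ : 0 < β)
    (hβd : β < finrank ℝ E - 2 * s) :
    ∃ κ > 0, ∀ φ : E → ℝ, ContDiff ℝ 2 φ → HasCompactSupport φ → (∀ x, 0 ≤ φ x) →
      ∫ x, φ x * (κ * decayProfile (β + 2 * s) x) ∂μ ≤
        ∫ x, decayProfile β x * ∫ z, secondDiff φ x z * fracKernel s z ∂μ ∂μ := by
  have : Nontrivial E := Module.nontrivial_of_finrank_pos (R := ℝ)
    (by exact_mod_cast (by linarith : (0 : ℝ) < finrank ℝ E))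
  obtain ⟨κ, hκ, hbound⟩ := exists_pos_mul_le_setIntegral_decayProfile (μ := μ) hs₀ hβ hβd
  refine ⟨2 * κ, by positivity, fun φ hφ hsupp hφ0 => ?_⟩
  have hcont := continuous_decayProfile (E := E) (β + 2 * s)
  refine integral_mul_le_of_eventually_le_setIntegral_secondDiff
    (isLevyKernel_fracKernel hs₀ hs₁) hφ hsupp hφ0 (continuous_decayProfile β).measurable
    (abs_decayProfile_le_one hβ.le)
    ((hφ.continuous.mul (by fun_prop)).integrable_of_hasCompactSupport hsupp.mul_right) ?_
  filter_upwards [Ioo_mem_nhdsGT (one_half_pos : (0 : ℝ) < 1 / 2)] with ε hε x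
  rw [setIntegral_secondDiff_mul_of_even (fracKernel_neg s)
    (integrableOn_decayProfile_sub_mul hs₀ hβ.le x hε.1), mul_assoc]
  exact mul_le_mul_of_nonneg_left (hbound x ε hε.1 hε.2) zero_le_two

end InnerDecayProfile

section WeakSupersolution

variable {n : ℕ} {s q : ℝ} {v : Euc n → ℝ}

lemma memLqLoc_of_continuous_of_pos (q : ℝ) (hv : Continuous v) (hpos : ∀ x, 0 < v x) :
    MemLqLoc n q v := fun R _ =>
  ((hv.rpow_const fun x => Or.inl (hpos x).ne').continuousOn.integrableOn_compact
    (isCompact_closedBall 0 R)).mono_set ball_subset_closedBall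

lemma memL1Tail_of_continuous_of_bounded (hs : 0 < s) (hv : Continuous v) {C : ℝ}
    (hC : ∀ x, |v x| ≤ C) : MemL1Tail n s v := by
  refine ⟨hv.locallyIntegrable, ?_⟩
  have htail : Integrable (fun x : Euc n => (1 + ‖x‖) ^ (-(n : ℝ) - 2 * s)) := by
    have h := integrable_one_add_norm (E := Euc n) (μ := volume) (r := n + 2 * s)
      (by rw [finrank_euclideanSpace_fin]; linarith)
    simpa only [neg_add'] using h
  exact htail.bdd_mul hv.abs.aestronglyMeasurable (.of_forall fun x => (abs_abs _).trans_le (hC x))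

lemma exists_isWeakSupersol_const_mul (hs : 0 < s) (hq : q ≠ 1) {K : Euc n → ℝ}
    (hv : Continuous v) (hpos : ∀ x, 0 < v x) {C : ℝ} (hC : ∀ x, |v x| ≤ C) {κ : ℝ} (hκ : 0 < κ)
    (h : ∀ φ, IsTestFun n φ → (∀ x, 0 ≤ φ x) →
      ∫ x, φ x * (κ * v x ^ q) ≤ ∫ x, v x * LK n K φ x) :
    ∃ c > 0, IsWeakSupersol n s q K fun x => c * v x := by
  set c := κ ^ (q - 1)⁻¹
  have hc : 0 < c := Real.rpow_pos_of_pos hκ _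
  have hcq : c ^ q = c * κ := by
    calc c ^ q = c * c ^ (q - 1) := by rw [Real.rpow_sub_one hc.ne', mul_div_cancel₀ _ hc.ne']
      _ = c * κ := by rw [Real.rpow_inv_rpow hκ.le (sub_ne_zero.2 hq)]
  have hcv : Continuous fun x => c * v x := hv.const_mul c
  have hcpos : ∀ x, 0 < c * v x := fun x => mul_pos hc (hpos x)
  refine ⟨c, hc, hcv.measurable, fun x => (hcpos x).le, memLqLoc_of_continuous_of_pos q hcv hcpos,
    memL1Tail_of_continuous_of_bounded hs hcv (C := c * C) fun x => ?_, fun φ hφ hφ0 => ?_⟩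
  · rw [abs_mul, abs_of_pos hc]
    exact mul_le_mul_of_nonneg_left (hC x) hc.le
  · calc ∫ x, (c * v x) ^ q * φ x = c * ∫ x, φ x * (κ * v x ^ q) := by
          rw [← integral_const_mul]
          congr 1; ext x
          rw [Real.mul_rpow hc.le (hpos x).le, hcq]
          ring
      _ ≤ c * ∫ x, v x * LK n K φ x := mul_le_mul_of_nonneg_left (h φ hφ hφ0) hc.le
      _ = ∫ x, c * v x * LK n K φ x := by simp only [← integral_const_mul, mul_assoc]

lemma LK_eq_half_mul_integral_secondDiff (n : ℕ) (s : ℝ) (φ : Euc n → ℝ) (x : Euc n) :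
    LK n (fun z => ‖z‖ ^ (-(n : ℝ) - 2 * s)) φ x =
      1 / 2 * ∫ z, secondDiff φ x z * fracKernel s z := by
  simp only [LK, secondDiff, fracKernel, finrank_euclideanSpace_fin]

theorem exists_pos_integral_mul_decayProfile_le_LK {β : ℝ} (hs₀ : 0 < s) (hs₁ : s < 1)
    (hβ : 0 < β) (hβn : β < n - 2 * s) :
    ∃ κ > 0, ∀ φ : Euc n → ℝ, IsTestFun n φ → (∀ x, 0 ≤ φ x) →
      ∫ x, φ x * (κ * decayProfile (β + 2 * s) x) ≤
        ∫ x, decayProfile β x * LK n (fun z => ‖z‖ ^ (-(n : ℝ) - 2 * s)) φ x := by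
  obtain ⟨κ, hκ, hweak⟩ := exists_pos_integral_mul_decayProfile_le
    (E := Euc n) (μ := volume) hs₀ hs₁ hβ (by rwa [finrank_euclideanSpace_fin])
  refine ⟨1 / 2 * κ, by positivity, fun φ hφ hφ0 => ?_⟩
  simp only [LK_eq_half_mul_integral_secondDiff, mul_assoc, mul_left_comm _ (1 / 2 : ℝ),
    integral_const_mul]
  have hC2 : ContDiff ℝ 2 φ := contDiff_infty.1 hφ.1 2
  exact mul_le_mul_of_nonneg_left (hweak φ hC2 hφ.2 hφ0) one_half_pos.le

end WeakSupersolution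

/-- Sharpness of the Serrin exponent: for `q > n/(n-2s)` and the fractional
Laplacian kernel `K(z) = |z|^{-n-2s}`, the function `u(x) = c(1+|x|)^{-2s/(q-1)}` is a positive
weak supersolution of `L_K u = u^q` for a sufficiently small constant `c > 0`. -/
theorem serrin_exponent_sharp
    (n : ℕ) (hn : 1 ≤ n) (s : ℝ) (hs : s ∈ Set.Ioo (0 : ℝ) 1)
    (hns : 2 * s < (n : ℝ))
    (q : ℝ) (hq : (n : ℝ) / ((n : ℝ) - 2 * s) < q) :
    ∃ c : ℝ, 0 < c ∧
      (∀ x : Euc n, 0 < c * (1 + ‖x‖) ^ (-(2 * s) / (q - 1))) ∧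
      IsWeakSupersol n s q (fun z : Euc n => ‖z‖ ^ (-(n : ℝ) - 2 * s))
        (fun x : Euc n => c * (1 + ‖x‖) ^ (-(2 * s) / (q - 1))) := by
  obtain ⟨hs₀, hs₁⟩ := hs
  rw [div_lt_iff₀ (by linarith)] at hq
  have hq₁ : 0 < q - 1 := by nlinarith
  set β := 2 * s / (q - 1) with hβ_def
  have hβ : 0 < β := by positivity
  have hβn : β < n - 2 * s := by rw [div_lt_iff₀ hq₁]; linarith
  have hβq : β + 2 * s = β * q := by rw [hβ_def]; field_simp; ring
  obtain ⟨κ, hκ, hweak⟩ := exists_pos_integral_mul_decayProfile_le_LK hs₀ hs₁ hβ hβn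
  simp only [hβq, ← decayProfile_rpow] at hweak
  obtain ⟨c, hc, hsuper⟩ := exists_isWeakSupersol_const_mul hs₀ (sub_pos.1 hq₁).ne'
    (continuous_decayProfile β) (decayProfile_pos β) (abs_decayProfile_le_one hβ.le) hκ hweak
  simp only [neg_div]
  exact ⟨c, hc, fun x => mul_pos hc (decayProfile_pos β x), hsuper⟩
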